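/- The function d(p,q) = √(I(p,q)) is a metric on the positive reals: for all p, q, r > 0, (i) I(p,q) ≥ 0, (ii) I(p,q) = 0 if and only if p = q, (iii) I(p,q) = I(q,p), and (iv) √(I(p,q)) ≤ √(I(p,r)) + √(I(r,q)). -/

import Mathlib

/-- Jensen–Shannon divergence (pointwise). -/
noncomputable def Idiv (p q : ℝ) : ℝ :=
  (p / 2) * Real.log (2 * p / (p + q)) + (q / 2) * Real.log (2 * q / (p + q))

open MeasureTheory Set in
lemma js_fub (h : ℝ → ℝ) (hm : Measurable h) (m a b : ℝ) (ha : m ≤ a) (hb : m ≤ b)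
    (hi : Integrable (fun t => h t * Real.exp (-m * t)) (volume.restrict (Ioi (0:ℝ)))) :
    Integrable (fun t => h t * ((Real.exp (-a * t) - Real.exp (-b * t)) / t))
      (volume.restrict (Ioi (0:ℝ))) ∧
    ∫ t in Ioi (0:ℝ), h t * ((Real.exp (-a * t) - Real.exp (-b * t)) / t) =
      ∫ s in a..b, ∫ t in Ioi (0:ℝ), h t * Real.exp (-s * t) := by
  have hI : Integrable (Function.uncurry (fun s t => h t * Real.exp (-s * t)))
      ((volume.restrict (uIoc a b)).prod (volume.restrict (Ioi (0:ℝ)))) := by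
    have h1 : Integrable (fun _ : ℝ => (1:ℝ)) (volume.restrict (uIoc a b)) := by
      have : IntegrableOn (fun _ : ℝ => (1:ℝ)) (uIoc a b) volume := by
        refine integrableOn_const ?_
        simp [uIoc]
      exact this
    have h2 := h1.mul_prod hi
    refine h2.mono ?_ ?_
    · apply Measurable.aestronglyMeasurable
      unfold Function.uncurry
      fun_prop
    · rw [Measure.prod_restrict]
      filter_upwards [ae_restrict_mem (measurableSet_uIoc.prod measurableSet_Ioi)] with x hx
      obtain ⟨hx1, hx2⟩ := hx
      have hs : m ≤ x.1 := le_trans (le_min ha hb) (le_of_lt hx1.1)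
      have ht : 0 < x.2 := hx2
      simp only [Function.uncurry, one_mul, norm_mul]
      gcongr
      rw [Real.norm_eq_abs, Real.norm_eq_abs, Real.abs_exp, Real.abs_exp]
      apply Real.exp_le_exp.mpr
      nlinarith
  have key : ∀ t ∈ Ioi (0:ℝ), ∫ s in a..b, h t * Real.exp (-s * t) =
      h t * ((Real.exp (-a * t) - Real.exp (-b * t)) / t) := by
    intro t ht
    have ht' : t ≠ 0 := ne_of_gt ht
    rw [intervalIntegral.integral_const_mul]
    congr 1
    have : ∀ s ∈ uIcc a b, HasDerivAt (fun s => -Real.exp (-s * t) / t) (Real.exp (-s * t)) s := by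
      intro s _
      have h3 : HasDerivAt (fun s : ℝ => -s * t) (-1 * t) s :=
        ((hasDerivAt_id s).neg).mul_const t
      have := (h3.exp.neg).div_const t
      refine this.congr_deriv ?_
      field_simp
    rw [intervalIntegral.integral_eq_sub_of_hasDerivAt this]
    · ring
    · apply Continuous.intervalIntegrable
      fun_prop
  constructor
  · have h4 := hI.integral_prod_right
    have h5 : Integrable (fun t => ∫ s in a..b, h t * Real.exp (-s * t))
        (volume.restrict (Ioi (0:ℝ))) := by
      simp_rw [intervalIntegral.intervalIntegral_eq_integral_uIoc]
      exact h4.smul (if a ≤ b then (1:ℝ) else -1)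
    refine h5.congr ?_
    filter_upwards [ae_restrict_mem measurableSet_Ioi] with t ht using key t ht
  · rw [intervalIntegral_integral_swap hI]
    exact (setIntegral_congr_fun measurableSet_Ioi key).symm

noncomputable def jsV (a b t : ℝ) : ℝ := (Real.exp (-a * t) - Real.exp (-b * t)) / t

open MeasureTheory Set in
lemma js_one (a b u : ℝ) (ha : 0 < a) (hb : 0 < b) (hu : 0 < u) :
    Integrable (fun t => jsV a b t * Real.exp (-u * t)) (volume.restrict (Ioi (0:ℝ))) ∧
    ∫ t in Ioi (0:ℝ), jsV a b t * Real.exp (-u * t) = Real.log (b + u) - Real.log (a + u) := by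
  have h0 : ∀ s : ℝ, 0 < s → ∀ t : ℝ, Real.exp (-u * t) * Real.exp (-s * t)
      = Real.exp (-(s + u) * t) := by
    intro s _ t; rw [← Real.exp_add]; congr 1; ring
  have hm : 0 < min a b := lt_min ha hb
  obtain ⟨h1, h2⟩ := js_fub (fun t => Real.exp (-u * t)) (by fun_prop) (min a b) a b
    (min_le_left _ _) (min_le_right _ _) (by
      simp_rw [h0 _ hm]
      exact exp_neg_integrableOn_Ioi 0 (by positivity))
  simp_rw [mul_comm (jsV _ _ _)]
  refine ⟨h1, ?_⟩
  unfold jsV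
  rw [h2]
  have h3 : ∀ s ∈ uIcc a b, ∫ t in Ioi (0:ℝ), Real.exp (-u * t) * Real.exp (-s * t)
      = (s + u)⁻¹ := by
    intro s hs
    have hs0 : 0 < s := lt_of_lt_of_le hm hs.1
    simp_rw [h0 s hs0]
    rw [integral_exp_mul_Ioi (by linarith)]
    have hne : s + u ≠ 0 := by positivity
    rw [mul_zero, Real.exp_zero, neg_div_neg_eq, one_div]
  rw [intervalIntegral.integral_congr h3]
  have h4 : ∀ s ∈ uIcc a b, HasDerivAt (fun s => Real.log (s + u)) ((s + u)⁻¹) s := by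
    intro s hs
    have hs0 : 0 < s := lt_of_lt_of_le hm hs.1
    have := ((hasDerivAt_id s).add_const u).log (by simp; positivity)
    simpa using this
  rw [intervalIntegral.integral_eq_sub_of_hasDerivAt h4]
  apply ContinuousOn.intervalIntegrable
  apply ContinuousOn.inv₀ (by fun_prop)
  intro s hs
  have hs0 : 0 < s := lt_of_lt_of_le hm hs.1
  positivity

noncomputable def jsG (x : ℝ) : ℝ := x * Real.log x

lemma jsG_deriv (b u : ℝ) (h : 0 < b + u) :
    HasDerivAt (fun u => jsG (b + u)) (Real.log (b + u) + 1) u := by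
  have h1 := (Real.hasDerivAt_mul_log h.ne')
  have h2 : HasDerivAt (fun u : ℝ => b + u) 1 u := (hasDerivAt_id u).const_add b
  have := h1.comp u h2
  simpa [jsG, Function.comp_def] using this

open MeasureTheory Set in
lemma js_two (a b c d : ℝ) (ha : 0 < a) (hb : 0 < b) (hc : 0 < c) (hd : 0 < d) :
    Integrable (fun t => jsV a b t * jsV c d t) (volume.restrict (Ioi (0:ℝ))) ∧
    ∫ t in Ioi (0:ℝ), jsV a b t * jsV c d t =
      jsG (b + d) - jsG (a + d) - jsG (b + c) + jsG (a + c) := by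
  have hm : 0 < min c d := lt_min hc hd
  obtain ⟨h1, h2⟩ := js_fub (jsV a b) (by unfold jsV; fun_prop) (min c d) c d
    (min_le_left _ _) (min_le_right _ _) (js_one a b _ ha hb hm).1
  refine ⟨h1, ?_⟩
  refine h2.trans ?_
  have h3 : ∀ s ∈ uIcc c d, ∫ t in Ioi (0:ℝ), jsV a b t * Real.exp (-s * t)
      = Real.log (b + s) - Real.log (a + s) := by
    intro s hs
    exact (js_one a b s ha hb (lt_of_lt_of_le hm hs.1)).2
  rw [intervalIntegral.integral_congr h3]
  have h4 : ∀ s ∈ uIcc c d, HasDerivAt (fun s => jsG (b + s) - jsG (a + s))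
      (Real.log (b + s) - Real.log (a + s)) s := by
    intro s hs
    have hs0 : 0 < s := lt_of_lt_of_le hm hs.1
    have := (jsG_deriv b s (by positivity)).sub (jsG_deriv a s (by positivity))
    refine this.congr_deriv ?_
    ring
  rw [intervalIntegral.integral_eq_sub_of_hasDerivAt h4]
  · ring
  apply ContinuousOn.intervalIntegrable
  intro s hs
  have hs0 : 0 < s := lt_of_lt_of_le hm hs.1
  apply ContinuousAt.continuousWithinAt
  have hb' : b + s ≠ 0 := by positivity
  have ha' : a + s ≠ 0 := by positivity
  fun_prop (disch := assumption)

open MeasureTheory Set in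
lemma js_self (p q : ℝ) (hp : 0 < p) (hq : 0 < q) :
    ∫ t in Ioi (0:ℝ), jsV p q t * jsV p q t = 4 * Idiv p q := by
  rw [(js_two p q p q hp hq hp hq).2]
  unfold jsG Idiv
  rw [Real.log_div (by positivity) (by positivity), Real.log_div (by positivity) (by positivity)]
  rw [← two_mul, ← two_mul, add_comm q p]
  ring

/-- `√(I(p,q))` is a metric on the positive reals. -/
theorem sqrt_I_is_metric :
    (∀ p q : ℝ, 0 < p → 0 < q → 0 ≤ Idiv p q) ∧
    (∀ p q : ℝ, 0 < p → 0 < q → (Idiv p q = 0 ↔ p = q)) ∧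
    (∀ p q : ℝ, 0 < p → 0 < q → Idiv p q = Idiv q p) ∧
    (∀ p q r : ℝ, 0 < p → 0 < q → 0 < r →
      Real.sqrt (Idiv p q) ≤ Real.sqrt (Idiv p r) + Real.sqrt (Idiv r q)) := by
  have hnn : ∀ p q : ℝ, 0 < p → 0 < q → 0 ≤ Idiv p q := by
    intro p q hp hq
    have h : 0 ≤ ∫ t in Set.Ioi (0:ℝ), jsV p q t * jsV p q t :=
      MeasureTheory.integral_nonneg (fun t => mul_self_nonneg _)
    rw [js_self p q hp hq] at h
    linarith
  refine ⟨hnn, ?_, ?_, ?_⟩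
  · intro p q hp hq
    constructor
    · intro h
      by_contra hne
      have aux : ∀ x y : ℝ, 0 < x → 0 < y → x ≠ y →
          (x - y) / 4 < x / 2 * Real.log (2 * x / (x + y)) := by
        intro x y hx hy hxy
        have h1 : Real.log ((x + y) / (2 * x)) < (x + y) / (2 * x) - 1 := by
          apply Real.log_lt_sub_one_of_pos (by positivity)
          intro h2
          rw [div_eq_one_iff_eq (by positivity)] at h2
          apply hxy; linarith
        have h2 : Real.log (2 * x / (x + y)) = -Real.log ((x + y) / (2 * x)) := by
          rw [← Real.log_inv, inv_div]
        rw [h2]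
        have h3 : x / 2 * Real.log ((x + y) / (2 * x)) < x / 2 * ((x + y) / (2 * x) - 1) :=
          mul_lt_mul_of_pos_left h1 (by positivity)
        have h4 : x / 2 * ((x + y) / (2 * x) - 1) = -((x - y) / 4) := by
          field_simp; ring
        linarith
      have h1 := aux p q hp hq hne
      have h2 := aux q p hq hp (Ne.symm hne)
      unfold Idiv at h
      rw [add_comm q p] at h2
      linarith
    · rintro rfl
      have : 2 * p / (p + p) = 1 := by field_simp; norm_num
      simp [Idiv, this]
  · intro p q _ _
    unfold Idiv
    rw [add_comm q p]
    ring
  · intro p q r hp hq hr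
    set C := ∫ t in Set.Ioi (0:ℝ), jsV p r t * jsV r q t with hC
    have iA := (js_two p r p r hp hr hp hr).1
    have iB := (js_two r q r q hr hq hr hq).1
    have iC := (js_two p r r q hp hr hr hq).1
    have eA := js_self p r hp hr
    have eB := js_self r q hr hq
    have quad : ∀ x : ℝ, ∫ t in Set.Ioi (0:ℝ), (x * jsV p r t + jsV r q t) ^ 2 =
        4 * Idiv p r * (x * x) + 2 * C * x + 4 * Idiv r q := by
      intro x
      have e : ∀ t, (x * jsV p r t + jsV r q t) ^ 2 =
        ((x * x) * (jsV p r t * jsV p r t) + (2 * x) * (jsV p r t * jsV r q t))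
          + jsV r q t * jsV r q t := by intro t; ring
      simp_rw [e]
      have iAC : MeasureTheory.Integrable (fun t => (x * x) * (jsV p r t * jsV p r t)
          + (2 * x) * (jsV p r t * jsV r q t))
          (MeasureTheory.volume.restrict (Set.Ioi (0:ℝ))) :=
        (iA.const_mul _).add (iC.const_mul _)
      rw [MeasureTheory.integral_add iAC iB,
        MeasureTheory.integral_add (iA.const_mul _) (iC.const_mul _),
        MeasureTheory.integral_const_mul, MeasureTheory.integral_const_mul, eA, eB, ← hC]
      ring
    have hd := discrim_le_zero (a := 4 * Idiv p r) (b := 2 * C) (c := 4 * Idiv r q) (by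
      intro x
      rw [← quad x]
      exact MeasureTheory.integral_nonneg (fun t => sq_nonneg _))
    have hs : 4 * Idiv p q = 4 * Idiv p r + 2 * C + 4 * Idiv r q := by
      rw [← js_self p q hp hq]
      have := quad 1
      simp only [one_mul, mul_one] at this
      rw [← this]
      congr 1
      ext t
      unfold jsV
      ring
    have nA := hnn p r hp hr
    have nB := hnn r q hr hq
    rw [discrim] at hd
    set α := Real.sqrt (Idiv p r) with hα
    set β := Real.sqrt (Idiv r q) with hβ
    have a2 : α ^ 2 = Idiv p r := Real.sq_sqrt nA
    have b2 : β ^ 2 = Idiv r q := Real.sq_sqrt nB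
    have a0 : 0 ≤ α := Real.sqrt_nonneg _
    have b0 : 0 ≤ β := Real.sqrt_nonneg _
    have hC2 : C ≤ 4 * (α * β) := by
      apply abs_le_of_sq_le_sq' _ (by positivity) |>.2
      rw [← a2, ← b2] at hd
      nlinarith
    apply Real.sqrt_le_iff.mpr
    constructor
    · positivity
    · nlinarith
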